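/- arXiv:math/0111114 — 2 statements merged into one kernel-verified Lean document; each statement's English description precedes it below -/
import Mathlib

section
/- Let E ∈ GL(m,k) and F ∈ GL(n,k) with m ≥ 2 and n ≥ 2. If tr(E·ᵀE⁻¹) = tr(F·ᵀF⁻¹), then the algebra B(E,F) is non-zero, i.e. 1 ≠ 0 in B(E,F). -/
open scoped TensorProduct
open Matrix

noncomputable section

variable (k : Type) [Field k]

/-- The matrix of free generators of the free algebra on `Fin m × Fin n`. -/
def gens (m n : ℕ) : Matrix (Fin m) (Fin n) (FreeAlgebra k (Fin m × Fin n)) :=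
  Matrix.of fun i j => FreeAlgebra.ι k (i, j)

/-- A scalar matrix viewed as a matrix over a `k`-algebra. -/
def liftMat {A : Type} [Semiring A] [Algebra k A] {p q : ℕ}
    (M : Matrix (Fin p) (Fin q) k) : Matrix (Fin p) (Fin q) A :=
  M.map (algebraMap k A)

/-- The defining relations of the algebra `B(E,F)`:
`F⁻¹ * ᵀz * E * z = 1` and `z * F⁻¹ * ᵀz * E = 1`. -/
inductive BRel {m n : ℕ} (E : Matrix (Fin m) (Fin m) k) (F : Matrix (Fin n) (Fin n) k) :
    FreeAlgebra k (Fin m × Fin n) → FreeAlgebra k (Fin m × Fin n) → Prop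
  | left (i j : Fin n) : BRel E F
      ((liftMat k (A := FreeAlgebra k (Fin m × Fin n)) F⁻¹ * (gens k m n)ᵀ *
          liftMat k (A := FreeAlgebra k (Fin m × Fin n)) E * gens k m n :
          Matrix (Fin n) (Fin n) (FreeAlgebra k (Fin m × Fin n))) i j)
      ((1 : Matrix (Fin n) (Fin n) (FreeAlgebra k (Fin m × Fin n))) i j)
  | right (i j : Fin m) : BRel E F
      ((gens k m n * liftMat k (A := FreeAlgebra k (Fin m × Fin n)) F⁻¹ * (gens k m n)ᵀ *
          liftMat k (A := FreeAlgebra k (Fin m × Fin n)) E :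
          Matrix (Fin m) (Fin m) (FreeAlgebra k (Fin m × Fin n))) i j)
      ((1 : Matrix (Fin m) (Fin m) (FreeAlgebra k (Fin m × Fin n))) i j)

/-- The algebra `B(E,F)`.  The Hopf algebra `B(E)` is `BB k E E`. -/
abbrev BB {m n : ℕ} (E : Matrix (Fin m) (Fin m) k) (F : Matrix (Fin n) (Fin n) k) :=
  RingQuot (BRel k E F)

/-- The matrix of generators of `B(E,F)`. -/
def ZMat {m n : ℕ} (E : Matrix (Fin m) (Fin m) k) (F : Matrix (Fin n) (Fin n) k) :
    Matrix (Fin m) (Fin n) (BB k E F) :=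
  Matrix.of fun i j => RingQuot.mkAlgHom k (BRel k E F) (gens k m n i j)
def Link (K : Type) [Field K] {m n : ℕ} (E Ei : Matrix (Fin m) (Fin m) K)
    (F Fi : Matrix (Fin n) (Fin n) K) : Prop :=
  ∃ (A : Type) (_ : Ring A) (_ : Algebra K A) (_ : Nontrivial A) (z : Fin m → Fin n → A),
    (∀ i j, ∑ a, ∑ b, E a b • (z a i * z b j) = algebraMap K A (F i j)) ∧
    (∀ a b, ∑ i, ∑ j, Fi i j • (z a i * z b j) = algebraMap K A (Ei a b))

theorem Link.trans {K : Type} [Field K] {m n p : ℕ} {E Ei : Matrix (Fin m) (Fin m) K}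
    {F Fi : Matrix (Fin n) (Fin n) K} {G Gi : Matrix (Fin p) (Fin p) K}
    (h1 : Link K E Ei F Fi) (h2 : Link K F Fi G Gi) : Link K E Ei G Gi := by
  obtain ⟨A, _, _, _, z, hz1, hz2⟩ := h1
  obtain ⟨B, _, _, _, w, hw1, hw2⟩ := h2
  refine ⟨A ⊗[K] B, inferInstance, inferInstance, inferInstance,
    fun a s => ∑ i, z a i ⊗ₜ[K] w i s, ?_, ?_⟩
  · intro s t
    have e1 : ∀ a b, E a b • ((∑ i, z a i ⊗ₜ[K] w i s) * (∑ j, z b j ⊗ₜ[K] w j t)) =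
        ∑ i, ∑ j, (E a b • (z a i * z b j)) ⊗ₜ[K] (w i s * w j t) := by
      intro a b
      simp only [Finset.sum_mul_sum, Finset.smul_sum, Algebra.TensorProduct.tmul_mul_tmul,
        TensorProduct.smul_tmul']
    have e2 : ∑ a, ∑ b, E a b • ((∑ i, z a i ⊗ₜ[K] w i s) * (∑ j, z b j ⊗ₜ[K] w j t)) =
        ∑ i, ∑ j, (∑ a, ∑ b, E a b • (z a i * z b j)) ⊗ₜ[K] (w i s * w j t) := by
      simp only [e1, TensorProduct.sum_tmul]
      rw [Finset.sum_congr rfl fun a _ => Finset.sum_comm, Finset.sum_comm]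
      refine Finset.sum_congr rfl fun i _ => ?_
      rw [Finset.sum_congr rfl fun a _ => Finset.sum_comm, Finset.sum_comm]
    rw [e2]
    simp only [hz1, Algebra.algebraMap_eq_smul_one, TensorProduct.smul_tmul,
      ← TensorProduct.tmul_sum]
    rw [hw1, Algebra.algebraMap_eq_smul_one, TensorProduct.tmul_smul]
    rfl
  · intro a b
    have e1 : ∀ s t, Gi s t • ((∑ i, z a i ⊗ₜ[K] w i s) * (∑ j, z b j ⊗ₜ[K] w j t)) =
        ∑ i, ∑ j, (z a i * z b j) ⊗ₜ[K] (Gi s t • (w i s * w j t)) := by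
      intro s t
      simp only [Finset.sum_mul_sum, Finset.smul_sum, Algebra.TensorProduct.tmul_mul_tmul,
        TensorProduct.tmul_smul]
    have e2 : ∑ s, ∑ t, Gi s t • ((∑ i, z a i ⊗ₜ[K] w i s) * (∑ j, z b j ⊗ₜ[K] w j t)) =
        ∑ i, ∑ j, (z a i * z b j) ⊗ₜ[K] (∑ s, ∑ t, Gi s t • (w i s * w j t)) := by
      simp only [e1, TensorProduct.tmul_sum]
      rw [Finset.sum_congr rfl fun a _ => Finset.sum_comm, Finset.sum_comm]
      refine Finset.sum_congr rfl fun i _ => ?_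
      rw [Finset.sum_congr rfl fun a _ => Finset.sum_comm, Finset.sum_comm]
    rw [e2]
    simp only [hw2, Algebra.algebraMap_eq_smul_one, ← TensorProduct.smul_tmul,
      ← TensorProduct.sum_tmul]
    rw [hz2, Algebra.algebraMap_eq_smul_one, ← TensorProduct.smul_tmul']
    rfl

/-- congruences give links -/
theorem Link.of_congr {K : Type} [Field K] {m n : ℕ} {E Ei : Matrix (Fin m) (Fin m) K}
    {F Fi : Matrix (Fin n) (Fin n) K} (P : Matrix (Fin m) (Fin n) K)
    (h1 : Pᵀ * E * P = F) (h2 : P * Fi * Pᵀ = Ei) : Link K E Ei F Fi := by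
  refine ⟨K, inferInstance, inferInstance, inferInstance, P, ?_, ?_⟩
  · intro i j
    rw [← h1]
    simp only [Matrix.mul_apply, Matrix.transpose_apply, smul_eq_mul, Algebra.algebraMap_self,
      RingHom.id_apply, Finset.sum_mul]
    rw [Finset.sum_comm]
    exact Finset.sum_congr rfl fun _ _ => Finset.sum_congr rfl fun _ _ => by ring
  · intro i j
    rw [← h2]
    simp only [Matrix.mul_apply, Matrix.transpose_apply, smul_eq_mul, Algebra.algebraMap_self,
      RingHom.id_apply, Finset.sum_mul]
    rw [Finset.sum_comm]
    exact Finset.sum_congr rfl fun _ _ => Finset.sum_congr rfl fun _ _ => by ring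

theorem Link.op {K : Type} [Field K] {m n : ℕ} {E Ei : Matrix (Fin m) (Fin m) K}
    {F Fi : Matrix (Fin n) (Fin n) K} (h : Link K E Ei F Fi) : Link K Fiᵀ Fᵀ Eiᵀ Eᵀ := by
  obtain ⟨A, _, _, _, z, hz1, hz2⟩ := h
  refine ⟨Aᵐᵒᵖ, inferInstance, inferInstance, inferInstance,
    fun i a => MulOpposite.op (z a i), ?_, ?_⟩
  · intro a b
    apply MulOpposite.unop_injective
    simp only [Finset.unop_sum, MulOpposite.unop_smul, MulOpposite.unop_mul,
      MulOpposite.unop_op, MulOpposite.algebraMap_apply, Matrix.transpose_apply]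
    rw [← hz2, Finset.sum_comm]
  · intro a b
    apply MulOpposite.unop_injective
    simp only [Finset.unop_sum, MulOpposite.unop_smul, MulOpposite.unop_mul,
      MulOpposite.unop_op, MulOpposite.algebraMap_apply, Matrix.transpose_apply]
    rw [← hz1, Finset.sum_comm]

theorem Link.symm {K : Type} [Field K] {m n : ℕ} {E Ei : Matrix (Fin m) (Fin m) K}
    {F Fi : Matrix (Fin n) (Fin n) K} (hE : E * Ei = 1) (hF : F * Fi = 1)
    (h : Link K E Ei F Fi) : Link K F Fi E Ei := by
  have hE' : Ei * E = 1 := mul_eq_one_comm.1 hE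
  have hF' : Fi * F = 1 := mul_eq_one_comm.1 hF
  have a1 : Link K F Fi Fiᵀ Fᵀ := by
    refine Link.of_congr Fi ?_ ?_
    · rw [Matrix.mul_assoc, hF, Matrix.mul_one]
    · rw [Matrix.mul_assoc, ← Matrix.transpose_mul, hF', Matrix.transpose_one, Matrix.mul_one]
  have a2 : Link K Eiᵀ Eᵀ E Ei := by
    refine Link.of_congr E ?_ ?_
    · rw [← Matrix.transpose_mul, hE', Matrix.transpose_one, Matrix.one_mul]
    · rw [hE, Matrix.one_mul]
  exact (a1.trans h.op).trans a2

/-! the generic construction -/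

section generic
variable {K : Type} [Field K] {m : ℕ}

def Yf (q : K) (Ei : Matrix (Fin m) (Fin m) K) (lam : Fin m → K) :
    List (Fin m) → Fin m → ((List (Fin m) → K) →ₗ[K] K)
  | [], a => lam a • LinearMap.proj []
  | b :: u, a => q • (Yf q Ei lam u b).comp (LinearMap.funLeft K K (fun w => a :: w)) +
      Ei a b • LinearMap.proj u

theorem Yf_nil (q : K) (Ei : Matrix (Fin m) (Fin m) K) (lam : Fin m → K) (a : Fin m)
    (f : List (Fin m) → K) : Yf q Ei lam [] a f = lam a * f [] := by
  simp [Yf]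

theorem Yf_cons (q : K) (Ei : Matrix (Fin m) (Fin m) K) (lam : Fin m → K) (a b : Fin m)
    (u : List (Fin m)) (f : List (Fin m) → K) : Yf q Ei lam (b :: u) a f =
      q * Yf q Ei lam u b (fun w => f (a :: w)) + Ei a b * f u := by
  simp [Yf]; left; rfl

def SS (E : Matrix (Fin m) (Fin m) K) (lam : Fin m → K) : Submodule K (List (Fin m) → K) where
  carrier := {f | (∀ u w, ∑ a, ∑ b, E a b * f (u ++ a :: b :: w) = 0) ∧
    ∀ u, ∑ a, (E *ᵥ lam) a * f (u ++ [a]) = f u}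
  zero_mem' := by simp
  add_mem' := by
    rintro f g ⟨h1, h2⟩ ⟨h3, h4⟩
    refine ⟨fun u w => ?_, fun u => ?_⟩
    · simp only [Pi.add_apply, mul_add, Finset.sum_add_distrib, h1, h3, add_zero]
    · simp only [Pi.add_apply, mul_add, Finset.sum_add_distrib, h2, h4]
  smul_mem' := by
    rintro c f ⟨h1, h2⟩
    refine ⟨fun u w => ?_, fun u => ?_⟩
    · simp only [Pi.smul_apply, smul_eq_mul, mul_left_comm _ c, ← Finset.mul_sum, h1, mul_zero]
    · simp only [Pi.smul_apply, smul_eq_mul, mul_left_comm _ c, ← Finset.mul_sum, h2]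

variable {E Ei : Matrix (Fin m) (Fin m) K} {lam : Fin m → K} {q r : K}

theorem X_mem {f : List (Fin m) → K} (hf : f ∈ SS E lam) (c : Fin m) :
    (fun w => f (c :: w)) ∈ SS E lam :=
  ⟨fun u w => hf.1 (c :: u) w, fun u => hf.2 (c :: u)⟩

theorem sumE (hE : E * Ei = 1) (c : Fin m) (g : Fin m → K) :
    ∑ a, ∑ b, E a b * (Ei b c * g a) = g c := by
  have : ∀ a, ∑ b, E a b * (Ei b c * g a) = (E * Ei) a c * g a := by
    intro a
    rw [Matrix.mul_apply, Finset.sum_mul]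
    exact Finset.sum_congr rfl fun _ _ => by ring
  simp [this, hE, Matrix.one_apply]

theorem sumE' (hE : Ei * E = 1) (c : Fin m) (g : Fin m → K) :
    ∑ a, ∑ b, E a b * (Ei c a * g b) = g c := by
  rw [Finset.sum_comm]
  have : ∀ b, ∑ a, E a b * (Ei c a * g b) = (Ei * E) c b * g b := by
    intro a
    rw [Matrix.mul_apply, Finset.sum_mul]
    exact Finset.sum_congr rfl fun _ _ => by ring
  simp [this, hE, Matrix.one_apply]

theorem lin_sum (L : (List (Fin m) → K) →ₗ[K] K) (g : Fin m → Fin m → List (Fin m) → K) :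
    ∑ a, ∑ b, E a b * L (g a b) = L (fun w => ∑ a, ∑ b, E a b * g a b w) := by
  have : (fun w => ∑ a, ∑ b, E a b * g a b w) = ∑ a, ∑ b, E a b • g a b := by
    ext w; simp [Finset.sum_apply]
  rw [this]; simp [map_sum]

/-- E(x,y) = 1 -/
theorem rel_xy (hE : E * Ei = 1) {f : List (Fin m) → K} (hf : f ∈ SS E lam) (u : List (Fin m)) :
    ∑ a, ∑ b, E a b * Yf q Ei lam u b (fun w => f (a :: w)) = f u := by
  cases u with
  | nil =>
    simp only [Yf_nil]
    have := hf.2 []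
    simp only [Matrix.mulVec, dotProduct, List.nil_append, Finset.sum_mul] at this
    rw [← this]
    exact Finset.sum_congr rfl fun _ _ => Finset.sum_congr rfl fun _ _ => by ring
  | cons c u =>
    simp only [Yf_cons, mul_add, Finset.sum_add_distrib]
    rw [sumE hE c (fun a => f (a :: u))]
    simp only [mul_left_comm _ q, ← Finset.mul_sum]
    rw [lin_sum (Yf q Ei lam u c) (fun a b w => f (a :: b :: w))]
    have : (fun w => ∑ a, ∑ b, E a b * f (a :: b :: w)) = 0 := by
      ext w; exact hf.1 [] w
    rw [this]; simp

/-- E(y,x) = r -/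
theorem rel_yx (hE : E * Ei = 1) (hr : q + ∑ a, ∑ b, E a b * Ei a b = r)
    {f : List (Fin m) → K} (hf : f ∈ SS E lam) (u : List (Fin m)) :
    ∑ a, ∑ b, E a b * Yf q Ei lam (b :: u) a f = r * f u := by
  simp only [Yf_cons, mul_add, Finset.sum_add_distrib, mul_left_comm _ q, ← Finset.mul_sum,
    rel_xy hE hf, ← hr, add_mul]
  simp only [← mul_assoc, ← Finset.sum_mul]

theorem Y_mem (hE : E * Ei = 1) (hr : q + ∑ a, ∑ b, E a b * Ei a b = r) (hq : q * r = -1)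
    (hl : lam ⬝ᵥ E *ᵥ lam = 0)
    {f : List (Fin m) → K} (hf : f ∈ SS E lam) (c : Fin m) :
    (fun u => Yf q Ei lam u c f) ∈ SS E lam := by
  have hE' : Ei * E = 1 := mul_eq_one_comm.1 hE
  refine ⟨fun u w => ?_, fun u => ?_⟩
  · induction u generalizing f c with
    | nil =>
      simp only [List.nil_append]
      simp only [Yf_cons q Ei lam c]
      simp only [mul_add, Finset.sum_add_distrib, mul_left_comm _ q, ← Finset.mul_sum]
      rw [rel_yx hE hr (X_mem hf c), sumE' hE' c (fun b => f (b :: w)), ← mul_assoc, hq]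
      ring
    | cons d u ih =>
      simp only [List.cons_append, Yf_cons, mul_add, Finset.sum_add_distrib, mul_left_comm _ q,
        ← Finset.mul_sum]
      rw [ih (X_mem hf c)]
      simp only [mul_left_comm _ (Ei c d), ← Finset.mul_sum]
      rw [hf.1]; simp
  · induction u generalizing f c with
    | nil =>
      simp only [List.nil_append, Yf_cons, Yf_nil, mul_add, Finset.sum_add_distrib]
      have e1 : ∑ x, (E *ᵥ lam) x * (q * (lam x * f [c])) = q * f [c] * (lam ⬝ᵥ E *ᵥ lam) := by
        rw [dotProduct, Finset.mul_sum]
        exact Finset.sum_congr rfl fun _ _ => by ring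
      have e2 : ∑ x, (E *ᵥ lam) x * (Ei c x * f []) = (Ei *ᵥ (E *ᵥ lam)) c * f [] := by
        rw [Matrix.mulVec, dotProduct, Finset.sum_mul]
        exact Finset.sum_congr rfl fun _ _ => by ring
      rw [e1, e2, hl, Matrix.mulVec_mulVec, hE', Matrix.one_mulVec]; simp
    | cons d u ih =>
      simp only [List.cons_append, Yf_cons, mul_add, Finset.sum_add_distrib, mul_left_comm _ q,
        ← Finset.mul_sum]
      rw [ih (X_mem hf c)]
      simp only [mul_left_comm _ (Ei c d), ← Finset.mul_sum]
      rw [hf.2]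

theorem rel_yy (hE : E * Ei = 1) (hr : q + ∑ a, ∑ b, E a b * Ei a b = r) (hq : q * r = -1)
    (hl : lam ⬝ᵥ E *ᵥ lam = 0)
    {f : List (Fin m) → K} (hf : f ∈ SS E lam) (u : List (Fin m)) :
    ∑ a, ∑ b, E a b * Yf q Ei lam u b (fun w => Yf q Ei lam w a f) = 0 := by
  cases u with
  | nil =>
    simp only [Yf_nil]
    have : ∑ a, ∑ b, E a b * (lam b * (lam a * f [])) = (lam ⬝ᵥ E *ᵥ lam) * f [] := by
      simp only [dotProduct, Matrix.mulVec, Finset.mul_sum, Finset.sum_mul]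
      exact Finset.sum_congr rfl fun _ _ => Finset.sum_congr rfl fun _ _ => by ring
    rw [this, hl, zero_mul]
  | cons c u =>
    simp only [Yf_cons q Ei lam _ c, mul_add, Finset.sum_add_distrib]
    rw [sumE hE c (fun a => Yf q Ei lam u a f)]
    simp only [mul_left_comm _ q, ← Finset.mul_sum]
    rw [lin_sum (Yf q Ei lam u c) (fun a b w => Yf q Ei lam (b :: w) a f)]
    have : (fun w => ∑ a, ∑ b, E a b * Yf q Ei lam (b :: w) a f) = r • f := by
      ext w; rw [rel_yx hE hr hf]; rfl
    rw [this, map_smul, smul_eq_mul, ← mul_assoc, hq]; ring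

def Xop (E : Matrix (Fin m) (Fin m) K) (lam : Fin m → K) (a : Fin m) :
    Module.End K (SS E lam) where
  toFun f := ⟨fun w => f.1 (a :: w), X_mem f.2 a⟩
  map_add' _ _ := rfl
  map_smul' _ _ := rfl

def Yop (hE : E * Ei = 1) (hr : q + ∑ a, ∑ b, E a b * Ei a b = r) (hq : q * r = -1)
    (hl : lam ⬝ᵥ E *ᵥ lam = 0) (a : Fin m) :
    Module.End K (SS E lam) where
  toFun f := ⟨fun w => Yf q Ei lam w a f.1, Y_mem hE hr hq hl f.2 a⟩
  map_add' _ _ := by ext; simp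
  map_smul' _ _ := by ext; simp

theorem link_good (hE : E * Ei = 1) (hr : q + ∑ a, ∑ b, E a b * Ei a b = r) (hq : q * r = -1)
    (hl : lam ⬝ᵥ E *ᵥ lam = 0) (mu : Fin m → K) (hmu : mu ⬝ᵥ E *ᵥ mu = 0)
    (hml : mu ⬝ᵥ E *ᵥ lam = 1) :
    Link K E Ei !![0, 1; r, 0] !![0, -q; 1, 0] := by
  have hS : (fun w : List (Fin m) => (w.map mu).prod) ∈ SS E lam := by
    refine ⟨fun u w => ?_, fun u => ?_⟩
    · have : ∑ a, ∑ b, E a b * ((u ++ a :: b :: w).map mu).prod =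
          (mu ⬝ᵥ E *ᵥ mu) * ((u.map mu).prod * (w.map mu).prod) := by
        simp only [dotProduct, Matrix.mulVec, Finset.mul_sum, Finset.sum_mul, List.map_append,
          List.map_cons, List.prod_append, List.prod_cons]
        exact Finset.sum_congr rfl fun _ _ => Finset.sum_congr rfl fun _ _ => by ring
      rw [this, hmu, zero_mul]
    · have : ∑ a, (E *ᵥ lam) a * ((u ++ [a]).map mu).prod =
          (mu ⬝ᵥ E *ᵥ lam) * (u.map mu).prod := by
        simp only [dotProduct, Finset.sum_mul, List.map_append,
          List.map_cons, List.prod_append, List.prod_cons, List.map_nil, List.prod_nil]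
        exact Finset.sum_congr rfl fun _ _ => by ring
      rw [this, hml, one_mul]
  have : Nontrivial (SS E lam) := by
    refine ⟨⟨⟨_, hS⟩, 0, fun h => ?_⟩⟩
    have := congrFun (congrArg Subtype.val h) []
    simp at this
  refine ⟨(Module.End K (SS E lam))ᵐᵒᵖ, inferInstance, inferInstance, inferInstance,
    fun a i => MulOpposite.op (if i = 0 then Xop E lam a else Yop hE hr hq hl a), ?_, ?_⟩
  · intro i j
    apply MulOpposite.unop_injective
    simp only [Finset.unop_sum, MulOpposite.unop_smul, MulOpposite.unop_mul,
      MulOpposite.unop_op, MulOpposite.algebraMap_apply]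
    ext f u
    fin_cases i <;> fin_cases j
    · simpa [Xop, Module.algebraMap_end_apply, LinearMap.sum_apply] using f.2.1 [] u
    · simpa [Xop, Yop, Module.algebraMap_end_apply, LinearMap.sum_apply] using
        rel_xy (q := q) hE f.2 u
    · simpa [Xop, Yop, Module.algebraMap_end_apply, LinearMap.sum_apply] using
        rel_yx hE hr f.2 u
    · simpa [Yop, Module.algebraMap_end_apply, LinearMap.sum_apply] using
        rel_yy hE hr hq hl f.2 u
  · intro a b
    apply MulOpposite.unop_injective
    simp only [Finset.unop_sum, MulOpposite.unop_smul, MulOpposite.unop_mul,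
      MulOpposite.unop_op, MulOpposite.algebraMap_apply]
    ext f u
    simp [Xop, Yop, Module.algebraMap_end_apply, Yf_cons]

end generic

/-- the Jordan case -/
theorem link_jordan {K : Type} [Field K] (c : K) :
    Link K !![c, 1; -1, 0] !![0, -1; 1, c] !![0, 1; -1, 0] !![0, -1; 1, 0] := by
  let g : Module.End K (ℤ → K) :=
    { toFun := fun f i => f (i + 1), map_add' := fun _ _ => rfl, map_smul' := fun _ _ => rfl }
  let h : Module.End K (ℤ → K) :=
    { toFun := fun f i => f (i - 1), map_add' := fun _ _ => rfl, map_smul' := fun _ _ => rfl }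
  let x : Module.End K (ℤ → K) :=
    { toFun := fun f i => - c * (i + 1) * f (i + 1)
      map_add' := fun _ _ => by ext; simp; ring
      map_smul' := fun _ _ => by ext; simp; ring }
  refine ⟨Module.End K (ℤ → K), inferInstance, inferInstance, inferInstance,
    !![g, 0; x, h], ?_, ?_⟩
  · intro i j
    refine LinearMap.ext fun f => funext fun u => ?_
    fin_cases i <;> fin_cases j <;>
      simp [Fin.sum_univ_two, g, h, x, Module.algebraMap_end_apply]
    all_goals try ring
  · intro i j
    refine LinearMap.ext fun f => funext fun u => ?_
    fin_cases i <;> fin_cases j <;>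
      simp [Fin.sum_univ_two, g, h, x, Module.algebraMap_end_apply]
    all_goals try ring

theorem dot_expand {K : Type} [Field K] {m : ℕ} (E : Matrix (Fin m) (Fin m) K)
    (x y x' y' : K) (u v : Fin m → K) :
    (x • u + y • v) ⬝ᵥ E *ᵥ (x' • u + y' • v) =
      x * x' * (u ⬝ᵥ E *ᵥ u) + x * y' * (u ⬝ᵥ E *ᵥ v) + y * x' * (v ⬝ᵥ E *ᵥ u)
        + y * y' * (v ⬝ᵥ E *ᵥ v) := by
  simp only [Matrix.mulVec_add, Matrix.mulVec_smul, add_dotProduct, dotProduct_add,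
    smul_dotProduct, dotProduct_smul, smul_eq_mul]
  ring

theorem link_std {K : Type} [Field K] [IsAlgClosed K] {m : ℕ} (hm : 2 ≤ m)
    {E Ei : Matrix (Fin m) (Fin m) K} (hE : E * Ei = 1) {q r : K}
    (hr : q + ∑ a, ∑ b, E a b * Ei a b = r) (hq : q * r = -1) :
    Link K E Ei !![0, 1; r, 0] !![0, -q; 1, 0] := by
  have hE' : Ei * E = 1 := mul_eq_one_comm.1 hE
  by_cases hgood : ∃ u v : Fin m → K, u ⬝ᵥ E *ᵥ u = 0 ∧ v ⬝ᵥ E *ᵥ v = 0 ∧ u ⬝ᵥ E *ᵥ v ≠ 0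
  · obtain ⟨u, v, hu, hv, huv⟩ := hgood
    refine link_good (lam := v) hE hr hq hv ((u ⬝ᵥ E *ᵥ v)⁻¹ • u) ?_ ?_
    · simp [Matrix.mulVec_smul, hu]
    · simp [huv]
  push Not at hgood
  -- nondegeneracy
  have nd : ∀ v : Fin m → K, (∀ u : Fin m → K, u ⬝ᵥ E *ᵥ v = 0) → v = 0 := by
    intro v hv
    have h0 : E *ᵥ v = 0 := by
      ext i; simpa using hv (Pi.single i 1)
    rw [← Matrix.one_mulVec v, ← hE', ← Matrix.mulVec_mulVec, h0, Matrix.mulVec_zero]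
  have nd' : ∀ v : Fin m → K, (∀ u : Fin m → K, v ⬝ᵥ E *ᵥ u = 0) → v = 0 := by
    intro v hv
    have h0 : v ᵥ* E = 0 := by
      ext i; have := hv (Pi.single i 1); rw [Matrix.dotProduct_mulVec] at this; simpa using this
    rw [← Matrix.vecMul_one v, ← hE, ← Matrix.vecMul_vecMul, h0, Matrix.zero_vecMul]
  -- an anisotropic vector
  obtain ⟨e, he⟩ : ∃ e : Fin m → K, e ⬝ᵥ E *ᵥ e ≠ 0 := by
    by_contra! hc
    have h1 : (Pi.single (⟨0, by omega⟩ : Fin m) (1 : K) : Fin m → K) = 0 :=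
      nd _ fun u => hgood u _ (hc u) (hc _)
    have := congrFun h1 ⟨0, by omega⟩
    simp at this
  -- decomposition
  have dec : ∀ v : Fin m → K, ∃ s : K, (v + s • e) ⬝ᵥ E *ᵥ (v + s • e) = 0 := by
    intro v
    obtain ⟨s, hs⟩ := IsAlgClosed.exists_root
      (Polynomial.C (e ⬝ᵥ E *ᵥ e) * Polynomial.X ^ 2 +
        Polynomial.C (v ⬝ᵥ E *ᵥ e + e ⬝ᵥ E *ᵥ v) * Polynomial.X + Polynomial.C (v ⬝ᵥ E *ᵥ v))
      (by rw [Polynomial.degree_quadratic he]; decide)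
    refine ⟨s, ?_⟩
    have := dot_expand E 1 s 1 s v e
    simp only [one_smul] at this
    rw [this]
    simp [Polynomial.IsRoot] at hs
    linear_combination hs
  -- a nonzero isotropic vector
  obtain ⟨h, hh0, hh⟩ : ∃ h : Fin m → K, h ≠ 0 ∧ h ⬝ᵥ E *ᵥ h = 0 := by
    let φ : (Fin m → K) →ₗ[K] (Fin 1 → K) :=
      LinearMap.pi fun _ => (dotProductBilin K K e).comp E.mulVecLin
    have hφ : ∀ v, φ v 0 = e ⬝ᵥ E *ᵥ v := fun v => rfl
    obtain ⟨v, hv, hv0⟩ := Submodule.exists_mem_ne_zero_of_ne_bot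
      (LinearMap.ker_ne_bot_of_finrank_lt (f := φ) (by simp; omega))
    have hev : e ⬝ᵥ E *ᵥ v = 0 := by rw [← hφ, LinearMap.mem_ker.1 hv]; rfl
    obtain ⟨s, hs⟩ := dec v
    refine ⟨v + s • e, fun hc => ?_, hs⟩
    have h1 : e ⬝ᵥ E *ᵥ (v + s • e) = 0 := by rw [hc]; simp
    rw [Matrix.mulVec_add, Matrix.mulVec_smul, dotProduct_add, dotProduct_smul, hev, zero_add,
      smul_eq_mul] at h1
    have : s = 0 := (mul_eq_zero.1 h1).resolve_right he
    rw [this] at hc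
    simp at hc
    exact hv0 hc
  have hhe : h ⬝ᵥ E *ᵥ e ≠ 0 := by
    intro hc
    refine hh0 (nd' h fun u => ?_)
    obtain ⟨s, hs⟩ := dec u
    have := hgood h _ hh hs
    rw [Matrix.mulVec_add, Matrix.mulVec_smul, dotProduct_add, dotProduct_smul, hc] at this
    simpa using this
  have hanti : e ⬝ᵥ E *ᵥ h + h ⬝ᵥ E *ᵥ e = 0 := by
    by_contra hc
    set x := e ⬝ᵥ E *ᵥ h + h ⬝ᵥ E *ᵥ e with hx
    have h1 := dot_expand E x (-(e ⬝ᵥ E *ᵥ e)) x (-(e ⬝ᵥ E *ᵥ e)) e h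
    have h2 : (x • e + (-(e ⬝ᵥ E *ᵥ e)) • h) ⬝ᵥ E *ᵥ (x • e + (-(e ⬝ᵥ E *ᵥ e)) • h) = 0 := by
      rw [h1, hh, hx]; ring
    have h3 := hgood h _ hh h2
    have h4 := dot_expand E 0 1 x (-(e ⬝ᵥ E *ᵥ e)) e h
    simp only [zero_smul, one_smul, zero_add] at h4
    rw [h4, hh] at h3
    simp at h3
    exact h3.elim hc hhe
  have hm2 : m = 2 := by
    let φ : (Fin m → K) →ₗ[K] (Fin 2 → K) :=
      LinearMap.pi fun i => (dotProductBilin K K (![e, h] i)).comp E.mulVecLin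
    have hφ : ∀ v i, φ v i = (![e, h] i) ⬝ᵥ E *ᵥ v := fun v i => rfl
    have hinj : Function.Injective φ := by
      rw [← LinearMap.ker_eq_bot, LinearMap.ker_eq_bot']
      intro v hv
      have h1 : e ⬝ᵥ E *ᵥ v = 0 := by simpa [hv] using (hφ v 0).symm
      have h2 : h ⬝ᵥ E *ᵥ v = 0 := by simpa [hv] using (hφ v 1).symm
      obtain ⟨s, hs⟩ := dec v
      have h3 := hgood h _ hh hs
      rw [Matrix.mulVec_add, Matrix.mulVec_smul, dotProduct_add, dotProduct_smul, h2, zero_add,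
        smul_eq_mul] at h3
      have hs0 : s = 0 := (mul_eq_zero.1 h3).resolve_right hhe
      rw [hs0, zero_smul, add_zero] at hs
      refine nd v fun u => ?_
      obtain ⟨s', hs'⟩ := dec u
      have h4 := hgood _ _ hs' hs
      rw [add_dotProduct, smul_dotProduct, h1] at h4
      simpa using h4
    have := LinearMap.finrank_le_finrank_of_injective hinj
    simp at this
    omega
  subst hm2
  set b := e ⬝ᵥ E *ᵥ h with hb
  have hbn : b ≠ 0 := by
    intro h0; rw [h0, zero_add] at hanti; exact hhe hanti
  have hc : h ⬝ᵥ E *ᵥ e = -b := by linear_combination hanti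
  set c := e ⬝ᵥ E *ᵥ e with hcdef
  let P : Matrix (Fin 2) (Fin 2) K := Matrix.of fun i j => ![e i, b⁻¹ * h i] j
  have hP : Pᵀ * E * P = !![c, 1; -1, 0] := by
    simp only [dotProduct, Matrix.mulVec, Fin.sum_univ_two] at hb hc hcdef hh
    ext i j
    fin_cases i <;> fin_cases j <;>
      simp [P, Matrix.mul_apply, Fin.sum_univ_two]
    · rw [hcdef]; ring
    · rw [← mul_inv_cancel₀ hbn]; linear_combination (-b⁻¹) * hb
    · rw [← mul_inv_cancel₀ hbn]; linear_combination (b⁻¹) * hc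
    · linear_combination (b⁻¹ * b⁻¹) * hh
  have hJ : !![c, 1; -1, 0] * !![0, -1; 1, c] = (1 : Matrix (Fin 2) (Fin 2) K) := by
    ext i j
    fin_cases i <;> fin_cases j <;> simp [Matrix.mul_apply, Fin.sum_univ_two]
  have hP2 : P * !![0, -1; 1, c] * Pᵀ = Ei := by
    have h1 : Pᵀ * (E * P * !![0, -1; 1, c]) = 1 := by
      rw [← Matrix.mul_assoc, ← Matrix.mul_assoc, hP, hJ]
    have h2 := mul_eq_one_comm.1 h1
    calc P * !![0, -1; 1, c] * Pᵀ = (Ei * E) * (P * !![0, -1; 1, c] * Pᵀ) := by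
          rw [hE', Matrix.one_mul]
      _ = Ei * (E * P * !![0, -1; 1, c] * Pᵀ) := by simp only [Matrix.mul_assoc]
      _ = Ei := by rw [h2, Matrix.mul_one]
  have L1 : Link K E Ei !![c, 1; -1, 0] !![0, -1; 1, c] := Link.of_congr P hP hP2
  -- trace is -2
  have htr : ∑ a, ∑ b, E a b * Ei a b = -2 := by
    obtain ⟨A, _, _, _, z, hz1, hz2⟩ := L1
    have e1 : algebraMap K A (∑ a, ∑ b, E a b * Ei a b) = algebraMap K A (-2) := by
      calc algebraMap K A (∑ a, ∑ b, E a b * Ei a b)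
          = ∑ a, ∑ b, E a b • algebraMap K A (Ei a b) := by
            simp [map_sum, Algebra.smul_def]
        _ = ∑ a, ∑ b, E a b • ∑ i, ∑ j, !![0, -1; 1, c] i j • (z a i * z b j) := by
            simp only [hz2]
        _ = ∑ i, ∑ j, !![0, -1; 1, c] i j • ∑ a, ∑ b, E a b • (z a i * z b j) := by
            simp only [Fin.sum_univ_two, smul_add, smul_smul]
            simp only [mul_comm (E _ _)]
            abel
        _ = _ := by
            simp only [hz1]
            simp only [Algebra.smul_def, ← map_mul, ← map_sum]
            refine congrArg (algebraMap K A) ?_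
            simp [Fin.sum_univ_two]; norm_num
    exact (algebraMap K A).injective e1
  have hq1 : q = 1 := by
    have : (q - 1) ^ 2 = 0 := by
      rw [htr] at hr; rw [← hr] at hq; linear_combination hq
    exact sub_eq_zero.1 (pow_eq_zero_iff (two_ne_zero) |>.1 this)
  have hr1 : r = -1 := by rw [hq1, one_mul] at hq; exact hq
  rw [hq1, hr1]
  exact L1.trans (link_jordan c)

theorem link_all {K : Type} [Field K] [IsAlgClosed K] {m n : ℕ} (hm : 2 ≤ m) (hn : 2 ≤ n)
    {E Ei : Matrix (Fin m) (Fin m) K} (hE : E * Ei = 1)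
    {F Fi : Matrix (Fin n) (Fin n) K} (hF : F * Fi = 1)
    (h : ∑ a, ∑ b, E a b * Ei a b = ∑ a, ∑ b, F a b * Fi a b) : Link K E Ei F Fi := by
  set t := ∑ a, ∑ b, E a b * Ei a b with ht
  obtain ⟨q, hq⟩ := IsAlgClosed.exists_root
      (Polynomial.C (1 : K) * Polynomial.X ^ 2 +
        Polynomial.C t * Polynomial.X + Polynomial.C 1)
      (by rw [Polynomial.degree_quadratic one_ne_zero]; decide)
  simp [Polynomial.IsRoot] at hq
  have hq' : q * (q + t) = -1 := by linear_combination hq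
  have l1 := link_std hm hE (q := q) (r := q + t) rfl hq'
  have l2 := link_std hn hF (q := q) (r := q + t) (by rw [h]) hq'
  refine l1.trans (l2.symm hF ?_)
  ext i j
  fin_cases i <;> fin_cases j <;> simp [Matrix.mul_apply, Fin.sum_univ_two]
  linear_combination -hq'

/-- **Statement 13.** If `tr(E·ᵀE⁻¹) = tr(F·ᵀF⁻¹)` then `B(E,F)` is non-zero. -/
theorem BB_nonzero_of_trace_eq {m n : ℕ} (hm : 2 ≤ m) (hn : 2 ≤ n)
    (E : Matrix (Fin m) (Fin m) k) (F : Matrix (Fin n) (Fin n) k)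
    (hE : IsUnit E.det) (hF : IsUnit F.det)
    (htr : (E * E⁻¹ᵀ).trace = (F * F⁻¹ᵀ).trace) :
    (1 : BB k E F) ≠ 0 := by
  let K := AlgebraicClosure k
  let ι : k →+* K := algebraMap k K
  have hE1 : E.map ι * E⁻¹.map ι = 1 := by
    rw [← Matrix.map_mul, Matrix.mul_nonsing_inv _ hE]; simp
  have hF1 : F.map ι * F⁻¹.map ι = 1 := by
    rw [← Matrix.map_mul, Matrix.mul_nonsing_inv _ hF]; simp
  have ht : ∑ a, ∑ b, E.map ι a b * E⁻¹.map ι a b = ∑ a, ∑ b, F.map ι a b * F⁻¹.map ι a b := by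
    simp only [Matrix.trace, Matrix.diag, Matrix.mul_apply, Matrix.transpose_apply] at htr
    simp only [Matrix.map_apply, ← map_mul, ← map_sum, htr]
  obtain ⟨A, _, _, _, z, hz1, hz2⟩ := link_all hm hn hE1 hF1 ht
  letI : Algebra k A := Algebra.compHom A ι
  have hal : ∀ c : k, algebraMap k A c = algebraMap K A (ι c) := fun c => rfl
  let φ : FreeAlgebra k (Fin m × Fin n) →ₐ[k] A := FreeAlgebra.lift k fun p => z p.1 p.2
  have hφg : ∀ a i, φ (gens k m n a i) = z a i := fun a i => by simp [φ, gens]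
  let Z : Matrix (Fin m) (Fin n) A := Matrix.of z
  have r1 : Zᵀ * E.map (algebraMap k A) * Z = F.map (algebraMap k A) := by
    ext i j
    simp only [Matrix.mul_apply, Matrix.map_apply, hal, Finset.sum_mul, Matrix.transpose_apply]
    rw [Finset.sum_comm]
    have := hz1 i j
    simp only [Matrix.map_apply] at this
    rw [← this]
    refine Finset.sum_congr rfl fun a _ => Finset.sum_congr rfl fun b _ => ?_
    rw [Algebra.smul_def, ← mul_assoc, Algebra.commutes (ι (E a b)) (z a i)]; rfl
  have r2 : Z * F⁻¹.map (algebraMap k A) * Zᵀ = E⁻¹.map (algebraMap k A) := by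
    ext i j
    simp only [Matrix.mul_apply, Matrix.map_apply, hal, Finset.sum_mul, Matrix.transpose_apply]
    rw [Finset.sum_comm]
    have := hz2 i j
    simp only [Matrix.map_apply] at this
    rw [← this]
    refine Finset.sum_congr rfl fun a _ => Finset.sum_congr rfl fun b _ => ?_
    rw [Algebra.smul_def, ← mul_assoc, Algebra.commutes (ι (F⁻¹ a b)) (z i a)]; rfl
  have gm : (gens k m n).map φ = Z := by ext a i; exact hφg a i
  have gmt : (gens k m n)ᵀ.map φ = Zᵀ := by ext a i; exact hφg i a
  have lm : ∀ {p q : ℕ} (M : Matrix (Fin p) (Fin q) k),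
      (liftMat k (A := FreeAlgebra k (Fin m × Fin n)) M).map φ = M.map (algebraMap k A) := by
    intro p q M; ext a b; simp [liftMat]
  have hrel : ∀ ⦃x y⦄, BRel k E F x y → φ x = φ y := by
    intro x y hxy
    cases hxy with
    | left i j =>
      have : (liftMat k (A := FreeAlgebra k (Fin m × Fin n)) F⁻¹ * (gens k m n)ᵀ *
          liftMat k (A := FreeAlgebra k (Fin m × Fin n)) E * gens k m n).map φ =
          (1 : Matrix (Fin n) (Fin n) (FreeAlgebra k (Fin m × Fin n))).map φ := by
        simp only [Matrix.map_mul, gm, gmt, lm]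
        rw [Matrix.mul_assoc, Matrix.mul_assoc, ← Matrix.mul_assoc Zᵀ, r1, ← Matrix.map_mul,
          Matrix.nonsing_inv_mul _ hF]
        simp
      exact congrFun (congrFun this i) j
    | right i j =>
      have : (gens k m n * liftMat k (A := FreeAlgebra k (Fin m × Fin n)) F⁻¹ * (gens k m n)ᵀ *
          liftMat k (A := FreeAlgebra k (Fin m × Fin n)) E).map φ =
          (1 : Matrix (Fin m) (Fin m) (FreeAlgebra k (Fin m × Fin n))).map φ := by
        simp only [Matrix.map_mul, gm, gmt, lm]
        rw [r2, ← Matrix.map_mul, Matrix.nonsing_inv_mul _ hE]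
        simp
      exact congrFun (congrFun this i) j
  intro h
  have := congrArg (RingQuot.liftAlgHom k ⟨φ, hrel⟩) h
  rw [map_one, map_zero] at this
  exact one_ne_zero this
end
end

section
/- Let E ∈ GL(m,k), F ∈ GL(n,k), and let q ∈ k* satisfy q² + tr(E·ᵀE⁻¹)·q + 1 = 0. Then there exists an algebra homomorphism δ : B(E,F) → B(E,E_q) ⊗ B(E_q,F) with δ(z_{ij}) = Σ_{k=1}^2 v_{ik} ⊗ w_{kj} for all 1 ≤ i ≤ m, 1 ≤ j ≤ n, where (v_{ik}) and (w_{kj}) denote the matrices of generators of B(E,E_q) and B(E_q,F) respectively. -/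
open scoped TensorProduct
open Matrix

noncomputable section

variable (k : Type) [Field k]

/-- The matrix `E_q` with rows `(0, 1)` and `(−q⁻¹, 0)`, so that `B(E_q) = O(SL_q(2))`. -/
def Eqm (q : k) : Matrix (Fin 2) (Fin 2) k := !![0, 1; -q⁻¹, 0]
theorem liftMat_map {A B : Type} [Semiring A] [Algebra k A] [Semiring B] [Algebra k B]
    (φ : A →ₐ[k] B) {p q : ℕ} (M : Matrix (Fin p) (Fin q) k) :
    (liftMat k M : Matrix _ _ A).map φ = liftMat k M := by
  ext i j
  simp [liftMat]

theorem map_mul_alg {A B : Type} [Semiring A] [Algebra k A] [Semiring B] [Algebra k B]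
    (φ : A →ₐ[k] B) {p q r : ℕ} (M : Matrix (Fin p) (Fin q) A) (N : Matrix (Fin q) (Fin r) A) :
    (M * N).map φ = M.map φ * N.map φ := by
  ext i j
  simp [Matrix.mul_apply]

theorem map_one_alg {A B : Type} [Semiring A] [Algebra k A] [Semiring B] [Algebra k B]
    (φ : A →ₐ[k] B) {p : ℕ} :
    (1 : Matrix (Fin p) (Fin p) A).map φ = 1 := by
  ext i j
  simp [Matrix.one_apply, apply_ite φ]

theorem liftMat_mul {A : Type} [Semiring A] [Algebra k A] {p q r : ℕ}
    (M : Matrix (Fin p) (Fin q) k) (N : Matrix (Fin q) (Fin r) k) :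
    liftMat k (A := A) (M * N) = liftMat k (A := A) M * liftMat k (A := A) N := by
  ext i j
  simp only [liftMat, Matrix.mul_apply, Matrix.map_apply, map_sum, map_mul]

theorem liftMat_one {A : Type} [Semiring A] [Algebra k A] {p : ℕ} :
    (liftMat k (1 : Matrix (Fin p) (Fin p) k) : Matrix _ _ A) = 1 := by
  ext i j
  simp [liftMat, Matrix.one_apply, apply_ite (algebraMap k A)]

theorem rel_left {A : Type} [Semiring A] [Algebra k A] {m n : ℕ}
    (E : Matrix (Fin m) (Fin m) k) (F : Matrix (Fin n) (Fin n) k) (g : BB k E F →ₐ[k] A) :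
    liftMat k (A := A) F⁻¹ * ((ZMat k E F).map g)ᵀ * liftMat k (A := A) E * (ZMat k E F).map g = 1 := by
  have h : (liftMat k (A := FreeAlgebra k (Fin m × Fin n)) F⁻¹ * (gens k m n)ᵀ * liftMat k (A := FreeAlgebra k (Fin m × Fin n)) E * gens k m n).map
      (g.comp (RingQuot.mkAlgHom k (BRel k E F))) =
      (1 : Matrix (Fin n) (Fin n) (FreeAlgebra k (Fin m × Fin n))).map
      (g.comp (RingQuot.mkAlgHom k (BRel k E F))) := by
    ext i j
    exact congrArg g (RingQuot.mkAlgHom_rel k (BRel.left i j))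
  rw [map_one_alg, map_mul_alg, map_mul_alg, map_mul_alg, liftMat_map, liftMat_map] at h
  exact h

theorem rel_right {A : Type} [Semiring A] [Algebra k A] {m n : ℕ}
    (E : Matrix (Fin m) (Fin m) k) (F : Matrix (Fin n) (Fin n) k) (g : BB k E F →ₐ[k] A) :
    (ZMat k E F).map g * liftMat k (A := A) F⁻¹ * ((ZMat k E F).map g)ᵀ * liftMat k (A := A) E = 1 := by
  have h : (gens k m n * liftMat k (A := FreeAlgebra k (Fin m × Fin n)) F⁻¹ * (gens k m n)ᵀ * liftMat k (A := FreeAlgebra k (Fin m × Fin n)) E).map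
      (g.comp (RingQuot.mkAlgHom k (BRel k E F))) =
      (1 : Matrix (Fin m) (Fin m) (FreeAlgebra k (Fin m × Fin n))).map
      (g.comp (RingQuot.mkAlgHom k (BRel k E F))) := by
    ext i j
    exact congrArg g (RingQuot.mkAlgHom_rel k (BRel.right i j))
  rw [map_one_alg, map_mul_alg, map_mul_alg, map_mul_alg, liftMat_map, liftMat_map] at h
  exact h

theorem exists_hom {A : Type} [Semiring A] [Algebra k A] {m n : ℕ}
    (E : Matrix (Fin m) (Fin m) k) (F : Matrix (Fin n) (Fin n) k)
    (X : Matrix (Fin m) (Fin n) A)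
    (h1 : liftMat k (A := A) F⁻¹ * Xᵀ * liftMat k (A := A) E * X = 1)
    (h2 : X * liftMat k (A := A) F⁻¹ * Xᵀ * liftMat k (A := A) E = 1) :
    ∃ δ : BB k E F →ₐ[k] A, ∀ i j, δ (ZMat k E F i j) = X i j := by
  let φ : FreeAlgebra k (Fin m × Fin n) →ₐ[k] A := FreeAlgebra.lift k fun p => X p.1 p.2
  have hg : (gens k m n).map φ = X := by
    ext i j
    simp [gens, φ]
  have hgt : (gens k m n)ᵀ.map φ = Xᵀ := by
    rw [← hg]; rfl
  have hr : ∀ ⦃x y⦄, BRel k E F x y → φ x = φ y := by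
    intro x y h
    cases h with
    | left i j =>
      have h : (liftMat k (A := FreeAlgebra k (Fin m × Fin n)) F⁻¹ * (gens k m n)ᵀ * liftMat k (A := FreeAlgebra k (Fin m × Fin n)) E * gens k m n).map φ =
          (1 : Matrix (Fin n) (Fin n) (FreeAlgebra k (Fin m × Fin n))).map φ := by
        rw [map_one_alg, map_mul_alg, map_mul_alg, map_mul_alg, liftMat_map, liftMat_map, hg, hgt,
          h1]
      exact congrFun (congrFun h i) j
    | right i j =>
      have h : (gens k m n * liftMat k (A := FreeAlgebra k (Fin m × Fin n)) F⁻¹ * (gens k m n)ᵀ * liftMat k (A := FreeAlgebra k (Fin m × Fin n)) E).map φ =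
          (1 : Matrix (Fin m) (Fin m) (FreeAlgebra k (Fin m × Fin n))).map φ := by
        rw [map_one_alg, map_mul_alg, map_mul_alg, map_mul_alg, liftMat_map, liftMat_map, hg, hgt,
          h2]
      exact congrFun (congrFun h i) j
  refine ⟨RingQuot.liftAlgHom k ⟨φ, hr⟩, fun i j => ?_⟩
  have := RingQuot.liftAlgHom_mkAlgHom_apply k φ hr (gens k m n i j)
  exact this.trans (congrFun (congrFun hg i) j)

/-- **Statement 14.** If `q ∈ k*` satisfies `q² + tr(E·ᵀE⁻¹)·q + 1 = 0`, there is an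
algebra homomorphism `δ : B(E,F) → B(E,E_q) ⊗ B(E_q,F)` with
`δ(z i j) = ∑ l, v i l ⊗ w l j`. -/
theorem BB_delta_hom {m n : ℕ}
    (E : Matrix (Fin m) (Fin m) k) (F : Matrix (Fin n) (Fin n) k)
    (hE : IsUnit E.det) (hF : IsUnit F.det) (q : k) (hq : q ≠ 0)
    (htr : q ^ 2 + (E * E⁻¹ᵀ).trace * q + 1 = 0) :
    ∃ δ : BB k E F →ₐ[k] (BB k E (Eqm k q) ⊗[k] BB k (Eqm k q) F),
      ∀ i j, δ (ZMat k E F i j) =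
        ∑ l, ZMat k E (Eqm k q) i l ⊗ₜ[k] ZMat k (Eqm k q) F l j := by
  have hG : IsUnit (Eqm k q).det := by
    simp [Eqm, Matrix.det_fin_two, hq]
  generalize Eqm k q = G at hG ⊢
  let a : BB k E G →ₐ[k] (BB k E G ⊗[k] BB k G F) := Algebra.TensorProduct.includeLeft
  let b : BB k G F →ₐ[k] (BB k E G ⊗[k] BB k G F) := Algebra.TensorProduct.includeRight
  have hv1 := rel_left k E G a
  have hv2 := rel_right k E G a
  have hw1 := rel_left k G F b
  have hw2 := rel_right k G F b
  have hc : ((ZMat k E G).map a * (ZMat k G F).map b)ᵀ =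
      ((ZMat k G F).map b)ᵀ * ((ZMat k E G).map a)ᵀ := by
    ext i j
    simp [Matrix.mul_apply, a, b]
  have hX : ∀ i j, ((ZMat k E G).map a * (ZMat k G F).map b) i j =
      ∑ l, ZMat k E G i l ⊗ₜ[k] ZMat k G F l j := by
    intro i j
    simp [Matrix.mul_apply, a, b]
  have g1 : liftMat k (A := BB k E G ⊗[k] BB k G F) G * liftMat k (A := BB k E G ⊗[k] BB k G F) G⁻¹ = 1 := by
    rw [← liftMat_mul, Matrix.mul_nonsing_inv _ hG, liftMat_one]
  generalize (ZMat k E G).map a = V at *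
  generalize (ZMat k G F).map b = W at *
  have e1 : Vᵀ * liftMat k (A := BB k E G ⊗[k] BB k G F) E * V = liftMat k (A := BB k E G ⊗[k] BB k G F) G := by
    calc _ = (liftMat k (A := BB k E G ⊗[k] BB k G F) G * liftMat k (A := BB k E G ⊗[k] BB k G F) G⁻¹) * (Vᵀ * liftMat k (A := BB k E G ⊗[k] BB k G F) E * V) := by rw [g1, one_mul]
      _ = liftMat k (A := BB k E G ⊗[k] BB k G F) G * (liftMat k (A := BB k E G ⊗[k] BB k G F) G⁻¹ * Vᵀ * liftMat k (A := BB k E G ⊗[k] BB k G F) E * V) := by simp only [Matrix.mul_assoc]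
      _ = _ := by rw [hv1, mul_one]
  have e2 : W * liftMat k (A := BB k E G ⊗[k] BB k G F) F⁻¹ * Wᵀ = liftMat k (A := BB k E G ⊗[k] BB k G F) G⁻¹ := by
    calc _ = (W * liftMat k (A := BB k E G ⊗[k] BB k G F) F⁻¹ * Wᵀ) * (liftMat k (A := BB k E G ⊗[k] BB k G F) G * liftMat k (A := BB k E G ⊗[k] BB k G F) G⁻¹) := by rw [g1, mul_one]
      _ = (W * liftMat k (A := BB k E G ⊗[k] BB k G F) F⁻¹ * Wᵀ * liftMat k (A := BB k E G ⊗[k] BB k G F) G) * liftMat k (A := BB k E G ⊗[k] BB k G F) G⁻¹ := by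
        simp only [Matrix.mul_assoc]
      _ = _ := by rw [hw2, one_mul]
  obtain ⟨δ, hδ⟩ := exists_hom k E F (V * W)
    (by
      rw [hc]
      calc _ = liftMat k (A := BB k E G ⊗[k] BB k G F) F⁻¹ * Wᵀ * (Vᵀ * liftMat k (A := BB k E G ⊗[k] BB k G F) E * V) * W := by simp only [Matrix.mul_assoc]
        _ = 1 := by rw [e1, hw1])
    (by
      rw [hc]
      calc _ = V * (W * liftMat k (A := BB k E G ⊗[k] BB k G F) F⁻¹ * Wᵀ) * Vᵀ * liftMat k (A := BB k E G ⊗[k] BB k G F) E := by simp only [Matrix.mul_assoc]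
        _ = 1 := by rw [e2, hv2])
  exact ⟨δ, fun i j => (hδ i j).trans (hX i j)⟩
end
end
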